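/- Let Ω ⊆ ℝ³ be open and let S : ℝ³ → ℝ^{3×3} be a twice continuously differentiable matrix field on Ω that is symmetric at every point, S(x)ᵀ = S(x). Define the matrix field J S as follows: first replace each row of S by its curl (so the intermediate field R has rows Rᵢ = curl(Sᵢ), where Sᵢ denotes the i-th row of S viewed as a vector field), and then replace each column of R by its curl. Then the resulting matrix field J S is symmetric at every point of Ω. -/

import Mathlib

open Matrix
/-- The `i`-th partial derivative of a scalar function on `ℝ³`. -/
noncomputable def pd (i : Fin 3) (f : (Fin 3 → ℝ) → ℝ) (x : Fin 3 → ℝ) : ℝ :=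
  fderiv ℝ f x (Pi.single i 1)

/-- The curl of a vector field on `ℝ³`. -/
noncomputable def curl (F : (Fin 3 → ℝ) → Fin 3 → ℝ) (x : Fin 3 → ℝ) : Fin 3 → ℝ :=
  ![pd 1 (fun y => F y 2) x - pd 2 (fun y => F y 1) x,
    pd 2 (fun y => F y 0) x - pd 0 (fun y => F y 2) x,
    pd 0 (fun y => F y 1) x - pd 1 (fun y => F y 0) x]

/-- `rowCurl S` : the matrix field obtained by replacing each row of `S` by its curl. -/
noncomputable def rowCurl (S : (Fin 3 → ℝ) → Matrix (Fin 3) (Fin 3) ℝ)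
    (x : Fin 3 → ℝ) : Matrix (Fin 3) (Fin 3) ℝ :=
  Matrix.of fun i j => curl (fun y => S y i) x j

/-- The second-order operator `J` of the elasticity complex: take the curl of each
row, then the curl of each column. -/
noncomputable def Jop (S : (Fin 3 → ℝ) → Matrix (Fin 3) (Fin 3) ℝ)
    (x : Fin 3 → ℝ) : Matrix (Fin 3) (Fin 3) ℝ :=
  Matrix.of fun i j => curl (fun y k => rowCurl S y k j) x i

theorem pd_differentiableAt {f : (Fin 3 → ℝ) → ℝ} {x : Fin 3 → ℝ}
    (hf : ContDiffAt ℝ 2 f x) (i : Fin 3) : DifferentiableAt ℝ (pd i f) x := by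
  have h1 : DifferentiableAt ℝ (fderiv ℝ f) x :=
    (hf.fderiv_right (m := 1) (by norm_num)).differentiableAt (by norm_num)
  exact h1.clm_apply (differentiableAt_const _)

theorem pd_pd {f : (Fin 3 → ℝ) → ℝ} {x : Fin 3 → ℝ}
    (hf : ContDiffAt ℝ 2 f x) (i j : Fin 3) :
    pd i (pd j f) x = fderiv ℝ (fderiv ℝ f) x (Pi.single i 1) (Pi.single j 1) := by
  have h1 : DifferentiableAt ℝ (fderiv ℝ f) x :=
    (hf.fderiv_right (m := 1) (by norm_num)).differentiableAt (by norm_num)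
  have h2 : HasFDerivAt (pd j f) _ x :=
    h1.hasFDerivAt.clm_apply (hasFDerivAt_const (Pi.single j 1 : Fin 3 → ℝ) x)
  rw [pd, h2.fderiv]
  simp

theorem pd_comm {f : (Fin 3 → ℝ) → ℝ} {x : Fin 3 → ℝ}
    (hf : ContDiffAt ℝ 2 f x) (i j : Fin 3) :
    pd i (pd j f) x = pd j (pd i f) x := by
  rw [pd_pd hf, pd_pd hf]
  exact (hf.isSymmSndFDerivAt (by simp)) _ _

theorem pd_sub' {f g : (Fin 3 → ℝ) → ℝ} {x : Fin 3 → ℝ}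
    (hf : ContDiffAt ℝ 2 f x) (hg : ContDiffAt ℝ 2 g x) (i j k : Fin 3) :
    pd i (fun y => pd j f y - pd k g y) x = pd i (pd j f) x - pd i (pd k g) x := by
  have h := ((pd_differentiableAt hf j).hasFDerivAt.sub (pd_differentiableAt hg k).hasFDerivAt)
  have h' : fderiv ℝ (fun y => pd j f y - pd k g y) x = _ := h.fderiv
  rw [pd, h']
  rfl

theorem pd_congr_ev {f g : (Fin 3 → ℝ) → ℝ} {x : Fin 3 → ℝ}
    (h : f =ᶠ[nhds x] g) (i j : Fin 3) : pd i (pd j f) x = pd i (pd j g) x := by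
  have h1 : pd j f =ᶠ[nhds x] pd j g := by
    filter_upwards [h.fderiv (𝕜 := ℝ)] with y hy
    simp only [pd, hy]
  simp only [pd] at h1 ⊢
  exact congrArg (fun L : (Fin 3 → ℝ) →L[ℝ] ℝ => L (Pi.single i 1)) (h1.fderiv_eq (𝕜 := ℝ))

/-- If `S` is a `C²` matrix field on an open set `Ω ⊆ ℝ³` which is symmetric at every
point, then `J S` is symmetric at every point of `Ω`. -/
theorem Jop_symm_of_symm
    (Ω : Set (Fin 3 → ℝ)) (hΩ : IsOpen Ω)
    (S : (Fin 3 → ℝ) → Matrix (Fin 3) (Fin 3) ℝ)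
    (hS : ∀ i j, ContDiffOn ℝ 2 (fun x => S x i j) Ω)
    (hsymm : ∀ x ∈ Ω, (S x)ᵀ = S x) :
    ∀ x ∈ Ω, (Jop S x)ᵀ = Jop S x := by
  intro x hx
  have hc : ∀ i j, ContDiffAt ℝ 2 (fun y => S y i j) x := fun i j =>
    (hS i j).contDiffAt (hΩ.mem_nhds hx)
  have hs : ∀ i j a b, pd a (pd b (fun y => S y i j)) x = pd a (pd b (fun y => S y j i)) x := by
    intro i j a b
    apply pd_congr_ev
    filter_upwards [hΩ.mem_nhds hx] with y hy
    exact congrFun (congrFun (hsymm y hy) j) i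
  have hd : ∀ i j k l m n a, pd a (fun y => pd m (fun y => S y i j) y - pd n (fun y => S y k l) y) x
      = pd a (pd m (fun y => S y i j)) x - pd a (pd n (fun y => S y k l)) x :=
    fun i j k l m n a => pd_sub' (hc i j) (hc k l) a m n
  have h01 := fun i j => pd_comm (hc i j) 1 0
  have h02 := fun i j => pd_comm (hc i j) 2 0
  have h12 := fun i j => pd_comm (hc i j) 2 1
  have s01 := hs 1 0
  have s02 := hs 2 0
  have s12 := hs 2 1
  ext i j
  fin_cases i <;> fin_cases j <;>
    simp [Jop, rowCurl, curl, hd, h01, h02, h12, s01, s02, s12] <;> ring
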